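/- Let s ≥ 1, l ≥ 2, t ≥ 1, let I be a two-sided ideal of F_s minimally generated by a set of t homogeneous elements of degree l, and let R = F_s/I with a_n = dim_k R_n. Then for every n ≥ l one has t·a_{n−l} ≥ s·a_{n−1} − a_n. -/

import Mathlib

open scoped ENNReal NNReal
open PowerSeries

noncomputable section

/-- The degree-`n` homogeneous component of the free algebra `k⟨X⟩`
(standard grading: each generator has degree 1). -/
def freeDeg (k : Type) [Field k] (X : Type) (n : ℕ) : Submodule k (FreeAlgebra k X) :=
  (Submodule.span k (Set.range (FreeAlgebra.ι k)) : Submodule k (FreeAlgebra k X)) ^ n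

/-- The two-sided ideal generated by a set `S`, as a `k`-submodule. -/
def idealGen (k : Type) [Field k] {A : Type} [Ring A] [Algebra k A] (S : Set A) :
    Submodule k A :=
  Submodule.span k {x : A | ∃ a b : A, ∃ s ∈ S, x = a * s * b}

/-- The dimension of the `n`-th component of the quotient of a graded algebra
(with components `𝒜`) by a homogeneous ideal `I`, i.e. `dim (𝒜 n / (I ∩ 𝒜 n))`. -/
def quotDim (k : Type) [Field k] {A : Type} [Ring A] [Algebra k A]
    (𝒜 : ℕ → Submodule k A) (I : Submodule k A) (n : ℕ) : ℕ :=
  Module.finrank k (↥(𝒜 n) ⧸ (I.comap (𝒜 n).subtype))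

/-- The radius of convergence of the power series `Σ a_n t^n`, as an element of `[0,∞]`. -/
def hradius (a : ℕ → ℝ) : ℝ≥0∞ :=
  ⨆ (r : ℝ≥0) (_ : Summable fun n => |a n| * (r : ℝ) ^ n), (r : ℝ≥0∞)

end

/-!
Write `F` for the free algebra, `V` for its degree-one part and `w i`, of degree `d i > 0`, for the
relations. Since `F = k + F V`, the ideal `I = ∑ F (w i) F` equals `I V + ∑ F (w i)`, so in degree
`n + 1` we get `I_{n+1} = I_n V + ∑ F_{n+1-d i} (w i)`. As `w i` has positive degree,
`I_{n+1-d i} (w i)` already lies in `I_n V`, hence the `i`-th summand contributes at most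
`dim (F / I)_{n+1-d i}` new dimensions to `I_{n+1}`. Subtracting from
`dim F_{n+1} = s * dim F_n` gives the inequality.
-/

open Module

section FiniteDimensional

variable {k M : Type*} [Field k] [AddCommGroup M] [Module k M]

theorem finrank_iSup_le_sum {ι : Type*} [Fintype ι] (P : ι → Submodule k M)
    [∀ i, FiniteDimensional k (P i)] :
    finrank k (⨆ i, P i : Submodule k M) ≤ ∑ i, finrank k (P i) := by
  classical
  rw [← Finset.sup_univ_eq_iSup]
  induction (Finset.univ : Finset ι) using Finset.induction_on with
  | empty => simp
  | insert i s hi ih =>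
    rw [Finset.sup_insert, Finset.sum_insert hi]
    exact (Submodule.finrank_add_le_finrank_add_finrank _ _).trans (by gcongr)

instance finiteDimensional_mul {A : Type*} [Ring A] [Algebra k A] (P Q : Submodule k A)
    [FiniteDimensional k P] [FiniteDimensional k Q] :
    FiniteDimensional k (P * Q : Submodule k A) :=
  Module.Finite.of_surjective (Submodule.mulMap' P Q) (Submodule.mulMap'_surjective P Q)

theorem finrank_mul_le {A : Type*} [Ring A] [Algebra k A] (P Q : Submodule k A)
    [FiniteDimensional k P] [FiniteDimensional k Q] :
    finrank k (P * Q : Submodule k A) ≤ finrank k P * finrank k Q :=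
  (LinearMap.finrank_le_finrank_of_surjective (Submodule.mulMap'_surjective P Q)).trans_eq
    finrank_tensorProduct

theorem exists_sup_eq_and_finrank_eq_finrank_quotient (P Q : Submodule k M) :
    ∃ D : Submodule k M, P ⊓ Q ⊔ D = Q ∧ finrank k D = finrank k (Q ⧸ P.comap Q.subtype) := by
  obtain ⟨C, hC⟩ := (P.comap Q.subtype).exists_isCompl
  refine ⟨C.map Q.subtype, ?_, ?_⟩
  · rw [inf_comm, ← Submodule.map_comap_subtype, ← Submodule.map_sup, hC.sup_eq_top,
      Submodule.map_subtype_top]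
  · rw [Submodule.finrank_map_subtype_eq, (Submodule.quotientEquivOfIsCompl _ _ hC).finrank_eq]

end FiniteDimensional

theorem quotDim_add_finrank_inf {k A : Type} [Field k] [Ring A] [Algebra k A]
    (𝒜 : ℕ → Submodule k A) (I : Submodule k A) (n : ℕ) [FiniteDimensional k (𝒜 n)] :
    quotDim k 𝒜 I n + finrank k (I ⊓ 𝒜 n : Submodule k A) = finrank k (𝒜 n) := by
  rw [quotDim, inf_comm, ← Submodule.map_comap_subtype, Submodule.finrank_map_subtype_eq,
    Submodule.finrank_quotient_add_finrank]

section IdealGen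

variable {k A : Type} [Field k] [Ring A] [Algebra k A]

theorem idealGen_eq_top_mul_span_mul_top (S : Set A) :
    idealGen k S = ⊤ * Submodule.span k S * ⊤ := by
  rw [← Submodule.span_univ, Submodule.span_mul_span, Submodule.span_mul_span, idealGen]
  congr 1
  ext x
  constructor
  · rintro ⟨a, b, s, hs, rfl⟩
    exact Set.mul_mem_mul (Set.mul_mem_mul (Set.mem_univ a) hs) (Set.mem_univ b)
  · rintro ⟨_, ⟨a, -, s, hs, rfl⟩, b, -, rfl⟩
    exact ⟨a, b, s, hs, rfl⟩

theorem idealGen_mul_le (S : Set A) (P : Submodule k A) : idealGen k S * P ≤ idealGen k S := by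
  rw [idealGen_eq_top_mul_span_mul_top, mul_assoc]
  gcongr
  exact le_top

theorem idealGen_eq_top_mul_span_sup {V : Submodule k A} (hV : 1 ⊔ ⊤ * V = ⊤) (S : Set A) :
    idealGen k S = ⊤ * Submodule.span k S ⊔ idealGen k S * V := by
  simp only [idealGen_eq_top_mul_span_mul_top]
  calc ⊤ * Submodule.span k S * ⊤ = ⊤ * Submodule.span k S * (1 ⊔ ⊤ * V) := by rw [hV]
    _ = ⊤ * Submodule.span k S ⊔ ⊤ * Submodule.span k S * ⊤ * V := by
      rw [Submodule.mul_sup, mul_one, mul_assoc _ ⊤ V]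

end IdealGen

section Graded

variable {R A : Type*} [CommSemiring R] [Semiring A] [Algebra R A]
  {𝒜 : ℕ → Submodule R A} [GradedAlgebra 𝒜]

theorem isHomogeneous_span {S : Set A} (hS : ∀ x ∈ S, SetLike.IsHomogeneousElem 𝒜 x) :
    (Submodule.span R S).IsHomogeneous 𝒜 := by
  intro n x hx
  rw [← GradedAlgebra.proj_apply]
  induction hx using Submodule.span_induction with
  | mem x hx =>
    obtain ⟨d, hd⟩ := hS x hx
    rw [GradedAlgebra.proj_apply]
    obtain rfl | hdn := eq_or_ne d n
    · rw [DirectSum.decompose_of_mem_same 𝒜 hd]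
      exact Submodule.subset_span hx
    · rw [DirectSum.decompose_of_mem_ne 𝒜 hd hdn]
      exact Submodule.zero_mem _
  | zero => simp only [map_zero, Submodule.zero_mem]
  | add x y _ _ hx hy => rw [map_add]; exact add_mem hx hy
  | smul c x _ hx => rw [map_smul]; exact Submodule.smul_mem _ c hx

theorem isHomogeneous_top : (⊤ : Submodule R A).IsHomogeneous 𝒜 := fun _ _ _ => trivial

theorem isHomogeneous_mul {P Q : Submodule R A} (hP : P.IsHomogeneous 𝒜)
    (hQ : Q.IsHomogeneous 𝒜) : (P * Q).IsHomogeneous 𝒜 := by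
  intro n x hx
  rw [← GradedAlgebra.proj_apply]
  induction hx using Submodule.mul_induction_on' with
  | mem_mul_mem p hp q hq =>
    rw [GradedAlgebra.proj_apply, DirectSum.decompose_mul,
      DirectSum.coe_mul_apply_eq_sum_antidiagonal]
    exact sum_mem fun ij _ => Submodule.mul_mem_mul (hP ij.1 hp) (hQ ij.2 hq)
  | add x _ y _ hx hy => rw [map_add]; exact add_mem hx hy

theorem map_proj_mul_le {P Q : Submodule R A} {d n : ℕ} (hP : P.IsHomogeneous 𝒜)
    (hQ : Q ≤ 𝒜 d) (hdn : d ≤ n) :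
    (P * Q).map (GradedAlgebra.proj 𝒜 n) ≤ (P ⊓ 𝒜 (n - d)) * Q := by
  rw [Submodule.map_le_iff_le_comap, Submodule.mul_le]
  intro p hp q hq
  rw [Submodule.mem_comap, GradedAlgebra.proj_apply,
    DirectSum.coe_decompose_mul_of_right_mem_of_le 𝒜 (hQ hq) hdn]
  exact Submodule.mul_mem_mul ⟨hP _ hp, SetLike.coe_mem _⟩ hq

theorem map_proj_mul_eq_bot {P Q : Submodule R A} {d n : ℕ} (hQ : Q ≤ 𝒜 d) (hnd : n < d) :
    (P * Q).map (GradedAlgebra.proj 𝒜 n) = ⊥ := by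
  rw [eq_bot_iff, Submodule.map_le_iff_le_comap, Submodule.mul_le]
  intro p _ q hq
  exact DirectSum.coe_decompose_mul_of_right_mem_of_not_le 𝒜 (hQ hq) hnd.not_ge

end Graded

section StandardGraded

variable {k A : Type} [Field k] [Ring A] [Algebra k A] {𝒜 : ℕ → Submodule k A}

theorem idealGen_inf_mul_span_le (h𝒜 : ∀ n, 𝒜 n = 𝒜 1 ^ n) (S : Set A) {x : A} {e n : ℕ}
    (hx : x ∈ 𝒜 (e + 1)) (hen : e ≤ n) :
    (idealGen k S ⊓ 𝒜 (n - e)) * Submodule.span k {x} ≤ (idealGen k S ⊓ 𝒜 n) * 𝒜 1 := by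
  have hadd : 𝒜 (n - e) * 𝒜 e = 𝒜 n := by
    rw [h𝒜 (n - e), h𝒜 e, ← pow_add, Nat.sub_add_cancel hen, ← h𝒜 n]
  calc (idealGen k S ⊓ 𝒜 (n - e)) * Submodule.span k {x}
      ≤ (idealGen k S ⊓ 𝒜 (n - e)) * (𝒜 e * 𝒜 1) := by
        gcongr
        rwa [Submodule.span_singleton_le_iff_mem, h𝒜 e, ← pow_succ, ← h𝒜]
    _ = (idealGen k S ⊓ 𝒜 (n - e)) * 𝒜 e * 𝒜 1 := (mul_assoc _ _ _).symm
    _ ≤ (idealGen k S ⊓ 𝒜 n) * 𝒜 1 := by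
        gcongr
        refine le_inf ?_ ?_
        · exact (mul_le_mul_left inf_le_left _).trans (idealGen_mul_le S _)
        · exact (mul_le_mul_left inf_le_right _).trans_eq hadd

variable [GradedAlgebra 𝒜] {ι : Type*} {w : ι → A} {d : ι → ℕ}

theorem one_sup_top_mul_eq_top_of_forall_eq_pow (h𝒜 : ∀ n, 𝒜 n = 𝒜 1 ^ n) :
    1 ⊔ ⊤ * 𝒜 1 = ⊤ := by
  refine top_unique ?_
  rw [← (DirectSum.Decomposition.isInternal 𝒜).submodule_iSup_eq_top]
  refine iSup_le fun n => ?_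
  rw [h𝒜 n]
  cases n with
  | zero => exact (pow_zero _).trans_le le_sup_left
  | succ n =>
    rw [pow_succ]
    exact le_sup_of_le_right (mul_le_mul' (le_iSup_of_le n (h𝒜 n).ge) le_rfl)

theorem isHomogeneous_idealGen_range (hw : ∀ i, w i ∈ 𝒜 (d i)) :
    (idealGen k (Set.range w)).IsHomogeneous 𝒜 := by
  rw [idealGen_eq_top_mul_span_mul_top]
  refine isHomogeneous_mul (isHomogeneous_mul isHomogeneous_top (isHomogeneous_span ?_))
    isHomogeneous_top
  rintro _ ⟨i, rfl⟩
  exact ⟨d i, hw i⟩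

theorem idealGen_inf_le (h𝒜 : ∀ n, 𝒜 n = 𝒜 1 ^ n) (hw : ∀ i, w i ∈ 𝒜 (d i)) (n : ℕ) :
    idealGen k (Set.range w) ⊓ 𝒜 (n + 1) ≤ (idealGen k (Set.range w) ⊓ 𝒜 n) * 𝒜 1 ⊔
      ⨆ i : {i // d i ≤ n + 1}, 𝒜 (n + 1 - d i) * Submodule.span k {w i} := by
  set I := idealGen k (Set.range w)
  have hspan (i : ι) : Submodule.span k {w i} ≤ 𝒜 (d i) := by
    rw [Submodule.span_singleton_le_iff_mem]; exact hw i
  have hproj : I ⊓ 𝒜 (n + 1) ≤ I.map (GradedAlgebra.proj 𝒜 (n + 1)) :=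
    fun x hx => ⟨x, hx.1, DirectSum.decompose_of_mem_same 𝒜 hx.2⟩
  have hIeq : I = I * 𝒜 1 ⊔ ⨆ i, ⊤ * Submodule.span k {w i} := by
    rw [← Submodule.mul_iSup, ← Submodule.span_range_eq_iSup, sup_comm]
    exact idealGen_eq_top_mul_span_sup (one_sup_top_mul_eq_top_of_forall_eq_pow h𝒜) _
  refine hproj.trans ?_
  conv_lhs => rw [hIeq, Submodule.map_sup, Submodule.map_iSup]
  refine sup_le_sup ?_ (iSup_le fun i => ?_)
  · simpa only [Nat.add_sub_cancel] using
      map_proj_mul_le (isHomogeneous_idealGen_range hw) (le_refl (𝒜 1)) (Nat.le_add_left 1 n)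
  · by_cases hi : d i ≤ n + 1
    · refine (map_proj_mul_le isHomogeneous_top (hspan i) hi).trans ?_
      rw [top_inf_eq]
      exact le_iSup (fun i : {i // d i ≤ n + 1} => 𝒜 (n + 1 - d i) * Submodule.span k {w i}) ⟨i, hi⟩
    · rw [map_proj_mul_eq_bot (hspan i) (not_le.mp hi)]
      exact bot_le

theorem finrank_idealGen_inf_le [∀ n, FiniteDimensional k (𝒜 n)] (h𝒜 : ∀ n, 𝒜 n = 𝒜 1 ^ n)
    (hd : ∀ i, 0 < d i) (hw : ∀ i, w i ∈ 𝒜 (d i)) (n : ℕ) [Fintype {i // d i ≤ n + 1}] :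
    finrank k (idealGen k (Set.range w) ⊓ 𝒜 (n + 1) : Submodule k A) ≤
      finrank k (idealGen k (Set.range w) ⊓ 𝒜 n : Submodule k A) * finrank k (𝒜 1) +
        ∑ i : {i // d i ≤ n + 1}, quotDim k 𝒜 (idealGen k (Set.range w)) (n + 1 - d i) := by
  set I := idealGen k (Set.range w)
  choose D hDsup hDrank using fun m => exists_sup_eq_and_finrank_eq_finrank_quotient I (𝒜 m)
  have (m : ℕ) : FiniteDimensional k (D m) :=
    Submodule.finiteDimensional_of_le (le_sup_right.trans_eq (hDsup m))
  have hle : I ⊓ 𝒜 (n + 1) ≤ (I ⊓ 𝒜 n) * 𝒜 1 ⊔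
      ⨆ i : {i // d i ≤ n + 1}, D (n + 1 - d i) * Submodule.span k {w i} := by
    refine (idealGen_inf_le h𝒜 hw n).trans (sup_le le_sup_left (iSup_le fun ⟨i, hi⟩ => ?_))
    obtain ⟨e, he⟩ := Nat.exists_eq_add_one.mpr (hd i)
    rw [← hDsup, Submodule.sup_mul]
    refine sup_le_sup ?_ (le_iSup (fun i : {i // d i ≤ n + 1} =>
      D (n + 1 - d i) * Submodule.span k {w i}) ⟨i, hi⟩)
    simp only [he, Nat.add_sub_add_right]
    exact idealGen_inf_mul_span_le h𝒜 _ (he ▸ hw i) (by lia)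
  have hterm (i : {i // d i ≤ n + 1}) :
      finrank k (D (n + 1 - d i) * Submodule.span k {w i} : Submodule k A) ≤
        quotDim k 𝒜 I (n + 1 - d i) := by
    refine (finrank_mul_le _ _).trans ?_
    rw [hDrank, ← quotDim]
    exact mul_le_of_le_one_right' (by simpa using finrank_span_le_card (R := k) {w i})
  calc finrank k (I ⊓ 𝒜 (n + 1) : Submodule k A)
      ≤ finrank k ((I ⊓ 𝒜 n) * 𝒜 1 : Submodule k A) +
          finrank k (⨆ i : {i // d i ≤ n + 1}, D (n + 1 - d i) * Submodule.span k {w i} :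
            Submodule k A) :=
        (Submodule.finrank_mono hle).trans (Submodule.finrank_add_le_finrank_add_finrank _ _)
    _ ≤ finrank k (I ⊓ 𝒜 n : Submodule k A) * finrank k (𝒜 1) +
          ∑ i : {i // d i ≤ n + 1}, quotDim k 𝒜 I (n + 1 - d i) :=
        add_le_add (finrank_mul_le _ _)
          ((finrank_iSup_le_sum _).trans (Finset.sum_le_sum fun i _ => hterm i))

end StandardGraded

section FreeAlgebra

variable {k X : Type} [Field k]

theorem ι_mem_freeDeg_one (x : X) : FreeAlgebra.ι k x ∈ freeDeg k X 1 := by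
  rw [freeDeg, pow_one]
  exact Submodule.subset_span ⟨x, rfl⟩

theorem freeDeg_eq_pow (n : ℕ) : freeDeg k X n = freeDeg k X 1 ^ n := by
  rw [freeDeg, freeDeg, pow_one]

instance freeDeg.gradedMonoid : SetLike.GradedMonoid (freeDeg k X) :=
  inferInstanceAs (SetLike.GradedMonoid
    fun n => Submodule.span k (Set.range (FreeAlgebra.ι k (X := X))) ^ n)

/-- The algebra homomorphism splitting an element of `k⟨X⟩` into its homogeneous components: it
sends each generator `x` to `x` placed in degree 1. -/
noncomputable def freeDeg.decompose (k X : Type) [Field k] :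
    FreeAlgebra k X →ₐ[k] DirectSum ℕ fun n => freeDeg k X n :=
  FreeAlgebra.lift k fun x => DirectSum.of _ 1 ⟨FreeAlgebra.ι k x, ι_mem_freeDeg_one x⟩

theorem freeDeg.decompose_of_mem_span {v : FreeAlgebra k X}
    (hv : v ∈ Submodule.span k (Set.range (FreeAlgebra.ι k))) :
    freeDeg.decompose k X v =
      DirectSum.of (fun n => freeDeg k X n) 1 ⟨v, by rwa [freeDeg, pow_one]⟩ := by
  induction hv using Submodule.span_induction with
  | mem v hv => obtain ⟨x, rfl⟩ := hv; exact FreeAlgebra.lift_ι_apply _ x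
  | zero => rw [map_zero]; exact (map_zero _).symm
  | add v w hv hw ihv ihw => rw [map_add, ihv, ihw, ← map_add]; rfl
  | smul c v hv ih => rw [map_smul, ih]; exact (DirectSum.lof k ℕ _ 1).map_smul c _ |>.symm

theorem freeDeg.decompose_of_mem {n : ℕ} {f : FreeAlgebra k X} (hf : f ∈ freeDeg k X n) :
    freeDeg.decompose k X f = DirectSum.of (fun n => freeDeg k X n) n ⟨f, hf⟩ := by
  induction hf using Submodule.pow_induction_on_left' with
  | algebraMap r => rw [AlgHom.commutes, DirectSum.algebraMap_apply]; rfl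
  | add f g n hf hg ihf ihg => rw [map_add, ihf, ihg, ← map_add]; rfl
  | mem_mul v hv n f hf ih =>
    rw [map_mul, ih, freeDeg.decompose_of_mem_span hv, DirectSum.of_mul_of]
    exact DirectSum.of_eq_of_gradedMonoid_eq (Sigma.subtype_ext (add_comm _ _) rfl)

noncomputable instance freeDeg.gradedAlgebra : GradedAlgebra (freeDeg k X) :=
  GradedAlgebra.ofAlgHom _ (freeDeg.decompose k X)
    (by ext x; simp [freeDeg.decompose])
    fun _ f => freeDeg.decompose_of_mem f.2

theorem freeDeg_eq_span_range_prod (n : ℕ) :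
    freeDeg k X n =
      Submodule.span k (Set.range fun v : Fin n → X => (List.ofFn (FreeAlgebra.ι k ∘ v)).prod) := by
  rw [freeDeg, Submodule.span_pow]
  congr 1
  ext f
  rw [Set.mem_pow]
  constructor
  · rintro ⟨v, rfl⟩
    choose x hx using fun i => (v i).2
    exact ⟨x, by simp only [Function.comp_def, hx]⟩
  · rintro ⟨x, rfl⟩
    exact ⟨fun i => ⟨FreeAlgebra.ι k (x i), x i, rfl⟩, rfl⟩

theorem basisFreeMonoid_ofList (l : List X) :
    FreeAlgebra.basisFreeMonoid k X (FreeMonoid.ofList l) = (l.map (FreeAlgebra.ι k)).prod := by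
  simp [FreeAlgebra.basisFreeMonoid, FreeAlgebra.equivMonoidAlgebraFreeMonoid]

theorem linearIndependent_prod_ofFn_ι (n : ℕ) :
    LinearIndependent k fun v : Fin n → X => (List.ofFn (FreeAlgebra.ι k ∘ v)).prod := by
  have hinj : Function.Injective fun v : Fin n → X => FreeMonoid.ofList (List.ofFn v) :=
    FreeMonoid.ofList.injective.comp List.ofFn_injective
  simpa only [Function.comp_def, basisFreeMonoid_ofList, List.map_ofFn] using
    (FreeAlgebra.basisFreeMonoid k X).linearIndependent.comp _ hinj

instance freeDeg.finiteDimensional [Finite X] (n : ℕ) : FiniteDimensional k (freeDeg k X n) :=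
  Module.Finite.iff_fg.mpr ((Submodule.fg_span (Set.finite_range _)).pow n)

theorem finrank_freeDeg [Fintype X] (n : ℕ) : finrank k (freeDeg k X n) = Fintype.card X ^ n := by
  rw [freeDeg_eq_span_range_prod, finrank_span_eq_card (linearIndependent_prod_ofFn_ι n)]
  simp

end FreeAlgebra

theorem stmt2_general {k X : Type} [Field k] [Fintype X] {ι : Type*} (w : ι → FreeAlgebra k X)
    (d : ι → ℕ) (hd : ∀ i, 0 < d i) (hw : ∀ i, w i ∈ freeDeg k X (d i)) (n : ℕ)
    [Fintype {i // d i ≤ n + 1}] :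
    Fintype.card X * quotDim k (freeDeg k X) (idealGen k (Set.range w)) n ≤
      quotDim k (freeDeg k X) (idealGen k (Set.range w)) (n + 1) +
        ∑ i : {i // d i ≤ n + 1},
          quotDim k (freeDeg k X) (idealGen k (Set.range w)) (n + 1 - d i) := by
  set I := idealGen k (Set.range w)
  have hI := finrank_idealGen_inf_le freeDeg_eq_pow hd hw n
  have hn := quotDim_add_finrank_inf (freeDeg k X) I n
  have hn1 := quotDim_add_finrank_inf (freeDeg k X) I (n + 1)
  rw [finrank_freeDeg] at hn hn1
  rw [finrank_freeDeg, pow_one] at hI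
  rw [pow_succ, ← hn] at hn1
  linarith

/-- **Govorov's second inequality** (part of Theorem 3.1). If `I ⊴ F_s` is minimally
generated by `t` homogeneous elements of degree `l` and `R = F_s/I` with `a n = dim R_n`,
then `t·a_{n-l} ≥ s·a_{n-1} - a_n` for every `n ≥ l`. -/
theorem stmt2 {k : Type} [Field k] (s l t : ℕ) (hs : 1 ≤ s) (hl : 2 ≤ l) (ht : 1 ≤ t)
    (α : Set (FreeAlgebra k (Fin s))) (hαfin : α.Finite) (hcard : α.ncard = t)
    (hdeg : ∀ f ∈ α, f ∈ freeDeg k (Fin s) l)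
    (I : Submodule k (FreeAlgebra k (Fin s)))
    (hgen : idealGen k α = I)
    (hmin : ∀ β ⊆ α, idealGen k β = I → β = α)
    (a : ℕ → ℕ) (ha : ∀ n, a n = quotDim k (freeDeg k (Fin s)) I n) :
    ∀ n : ℕ, l ≤ n → (s : ℤ) * a (n - 1) - a n ≤ (t : ℤ) * a (n - l) := by
  intro n hn
  subst hgen
  obtain ⟨m, rfl⟩ := Nat.exists_eq_add_one.mpr (by lia : 0 < n)
  have := hαfin.fintype
  have key : s * a m ≤ a (m + 1) + t * a (m + 1 - l) := by
    simpa [hn, ← ha, hcard] using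
      stmt2_general (Subtype.val : α → _) (fun _ => l) (fun _ => by lia) (fun f => hdeg f f.2) m
  rw [Nat.add_sub_cancel]
  zify at key
  linarith
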